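/- Let k be a principal ideal domain and K a simplicial complex. The reduced homology H̃_*(K; k) is generated by the classes of missing faces if and only if: (1) the abelian group C = coker(⊕_{I∈MF(K)} Z·x_I → H̃_*(K; Z)) is finite, (2) every prime p such that C has p-torsion is invertible in k, and (3) char k ≠ p for every prime p such that H̃_*(K; Z) has p-torsion. Moreover if these hold then H̃_*(K; k) ≅ H̃_*(K; Z) ⊗ k. -/

import Mathlib

/-!
STATEMENT 7: let `k` be a PID and `K` a finite simplicial complex.  The reduced homology
`H̃_*(K; k)` is generated by the classes of missing faces iff:
(1) the cokernel `C` of `⊕_{I∈MF(K)} ℤ·x_I → H̃_*(K; ℤ)` is finite,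
(2) every prime `p` such that `C` has `p`-torsion is invertible in `k`, and
(3) `char k ≠ p` for every prime `p` such that `H̃_*(K; ℤ)` has `p`-torsion.
Moreover, if these hold then `H̃_*(K; k) ≅ H̃_*(K; ℤ) ⊗ k`.
Reduced homology is realised concretely as cycles modulo boundaries of the augmented
simplicial chain complex (all degrees together), with chains given as functions on faces.
-/

/-- The boundary operator of the augmented simplicial chain complex on `Fin m`:
`d(e_J) = Σ_{j∈J} (−1)^{|J_{<j}|} e_{J∖{j}}`, extended linearly. -/
noncomputable def simplicialBoundary (R : Type*) [CommRing R] (m : ℕ) :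
    (Finset (Fin m) → R) →ₗ[R] (Finset (Fin m) → R) :=
  Matrix.mulVecLin (Matrix.of fun τ J : Finset (Fin m) =>
    ∑ j ∈ J, if J.erase j = τ then (-1 : R) ^ ((J.filter (· < j)).card) else 0)

/-- The submodule of chains supported on the faces of `K`. -/
noncomputable def chainsOn (R : Type*) [CommRing R] {m : ℕ} (K : Finset (Finset (Fin m))) :
    Submodule R (Finset (Fin m) → R) :=
  Submodule.pi Set.univ (fun σ => if σ ∈ K then (⊤ : Submodule R R) else ⊥)

/-- Cycles of the augmented simplicial chain complex of `K`. -/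
noncomputable def cyclesOn (R : Type*) [CommRing R] {m : ℕ} (K : Finset (Finset (Fin m))) :
    Submodule R (Finset (Fin m) → R) :=
  chainsOn R K ⊓ LinearMap.ker (simplicialBoundary R m)

/-- Boundaries of the augmented simplicial chain complex of `K`. -/
noncomputable def boundariesOn (R : Type*) [CommRing R] {m : ℕ} (K : Finset (Finset (Fin m))) :
    Submodule R (Finset (Fin m) → R) :=
  Submodule.map (simplicialBoundary R m) (chainsOn R K)

/-- The (total) reduced simplicial homology `H̃_*(K; R)`: cycles modulo boundaries. -/
noncomputable def redHomology (R : Type*) [CommRing R] {m : ℕ}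
    (K : Finset (Finset (Fin m))) : Type _ :=
  ↥(cyclesOn R K) ⧸ ((boundariesOn R K).comap (cyclesOn R K).subtype)

noncomputable instance (R : Type*) [CommRing R] {m : ℕ} (K : Finset (Finset (Fin m))) :
    AddCommGroup (redHomology R K) :=
  inferInstanceAs (AddCommGroup
    (↥(cyclesOn R K) ⧸ ((boundariesOn R K).comap (cyclesOn R K).subtype)))

noncomputable instance (R : Type*) [CommRing R] {m : ℕ} (K : Finset (Finset (Fin m))) :
    Module R (redHomology R K) :=
  inferInstanceAs (Module R
    (↥(cyclesOn R K) ⧸ ((boundariesOn R K).comap (cyclesOn R K).subtype)))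

/-- The chain `c_I = Σ_{i∈I} (−1)^{|I_{<i}|} e_{I∖{i}}` associated to `I ⊆ [m]`. -/
noncomputable def missingFaceChain (R : Type*) [CommRing R] {m : ℕ} (I : Finset (Fin m)) :
    Finset (Fin m) → R :=
  fun τ => ∑ i ∈ I, if I.erase i = τ then (-1 : R) ^ ((I.filter (· < i)).card) else 0

/-- The homology class `[∂Δ_I] ∈ H̃_{|I|−2}(K; R)` of a missing face `I`. -/
noncomputable def mfClass (R : Type*) [CommRing R] {m : ℕ} (K : Finset (Finset (Fin m)))
    (I : Finset (Fin m)) : redHomology R K :=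
  letI := Classical.dec (missingFaceChain R I ∈ cyclesOn R K)
  if h : missingFaceChain R I ∈ cyclesOn R K then
    (Submodule.Quotient.mk (⟨missingFaceChain R I, h⟩ : ↥(cyclesOn R K)) :
      ↥(cyclesOn R K) ⧸ ((boundariesOn R K).comap (cyclesOn R K).subtype))
  else 0

/-- `I` is a missing face of `K`: `I` is not a face but all its proper subsets are. -/
def IsMissingFace {m : ℕ} (K : Finset (Finset (Fin m))) (I : Finset (Fin m)) : Prop :=
  I ∉ K ∧ ∀ J ⊂ I, J ∈ K

/-!
Extension of scalars induces the universal coefficient map `A ⊗ H̃_*(K; R) → H̃_*(K; A)`, which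
carries the classes of missing faces to the classes of missing faces.  It is always injective, so
these classes generate `H̃_*(K; A)` iff the map is onto and they generate `A ⊗ H̃_*(K; R)` already.

The map is onto iff every cycle over `A` comes from `A ⊗ Z_*(K; R)`, iff `A ⊗ B → (chains over A)`
is injective for the boundary submodule `B`.  The invariant factors of `B` decide this: the prime
divisors of the invariant factors are the primes `p` with `p`-torsion in `H̃_*(K; R)`, and exactly
these have to act injectively on `A`.

Generation of `A ⊗ H̃_*(K; R)` means `A ⊗ C = 0` for the cokernel `C`, i.e. that `Ann(C)` generates
the unit ideal of `A`.  This forces `Ann(C) ≠ 0`, and otherwise can only fail at a maximal ideal of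
`A` lying over a prime `(p) ⊇ Ann(C)`, that is, over a prime at which `C` has torsion.
-/

open TensorProduct

theorem span_image_eq_top_iff_of_injective {R M N : Type*} [Ring R] [AddCommGroup M] [Module R M]
    [AddCommGroup N] [Module R N] {f : M →ₗ[R] N} (hf : Function.Injective f) (s : Set M) :
    Submodule.span R (f '' s) = ⊤ ↔ Function.Surjective f ∧ Submodule.span R s = ⊤ := by
  rw [Submodule.span_image, ← LinearMap.range_eq_top]
  refine ⟨fun h ↦ ?_, fun ⟨hrange, hs⟩ ↦ by rw [hs, Submodule.map_top, hrange]⟩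
  have hrange : LinearMap.range f = ⊤ := top_le_iff.1 (h.ge.trans LinearMap.map_le_range)
  exact ⟨hrange, Submodule.map_injective_of_injective hf (by rw [h, Submodule.map_top, hrange])⟩

theorem isSMulRegular_or_iff_torsion_imp {R A M : Type*} [Ring R] [AddCommGroup A] [Module R A]
    [AddCommGroup M] [Module R M] {r : R} :
    IsSMulRegular A r ∨ IsSMulRegular M r ↔
      ((∃ x : M, x ≠ 0 ∧ r • x = 0) → IsSMulRegular A r) := by
  rw [isSMulRegular_iff_right_eq_zero_of_smul (M := M), or_iff_not_imp_right, not_forall]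
  simp only [Classical.not_imp, and_comm, ne_eq]

section BaseChangeVanishing

variable {R : Type*} [CommRing R] (A : Type*) [CommRing A] [Algebra R A]
  {M : Type*} [AddCommGroup M] [Module R M]

theorem nontrivial_tensorProduct_of_annihilator_le_ker [Module.Finite R M] (L : Type*) [Field L]
    [Algebra R L] (h : Module.annihilator R M ≤ RingHom.ker (algebraMap R L)) :
    Nontrivial (L ⊗[R] M) := by
  let P : PrimeSpectrum R := ⟨RingHom.ker (algebraMap R L), RingHom.ker_isPrime _⟩
  have : P.asIdeal.IsPrime := P.2
  have : Nontrivial (P.asIdeal.ResidueField ⊗[R] M) :=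
    (Module.mem_support_iff_nontrivial_residueField_tensorProduct P).1
      (Module.mem_support_iff_of_finite.2 h)
  let residueFieldHom : P.asIdeal.ResidueField →ₐ[R] L :=
    Ideal.ResidueField.liftₐ P.asIdeal (Algebra.ofId R L) le_rfl
      fun _ hr ↦ isUnit_iff_ne_zero.2 hr
  algebraize [residueFieldHom.toRingHom]
  have : IsScalarTower R P.asIdeal.ResidueField L :=
    .of_algebraMap_eq' residueFieldHom.comp_algebraMap.symm
  exact (AlgebraTensorModule.cancelBaseChange R P.asIdeal.ResidueField L L M).symm.nontrivial

theorem subsingleton_tensorProduct_iff_map_annihilator_eq_top [Module.Finite R M] :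
    Subsingleton (A ⊗[R] M) ↔ (Module.annihilator R M).map (algebraMap R A) = ⊤ := by
  refine ⟨fun hAM ↦ ?_, fun htop ↦ ?_⟩
  · by_contra hne
    obtain ⟨Q, hQ, hle⟩ := Ideal.exists_le_maximal _ hne
    let := Ideal.Quotient.field Q
    have : Nontrivial ((A ⧸ Q) ⊗[R] M) :=
      nontrivial_tensorProduct_of_annihilator_le_ker (A ⧸ Q) fun r hr ↦
        Ideal.Quotient.eq_zero_iff_mem.2 (hle (Ideal.mem_map_of_mem _ hr))
    exact not_subsingleton ((A ⧸ Q) ⊗[R] M)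
      (AlgebraTensorModule.cancelBaseChange R A (A ⧸ Q) (A ⧸ Q) M).symm.subsingleton
  · have hle : (Module.annihilator R M).map (algebraMap R A) ≤
        Module.annihilator A (A ⊗[R] M) := by
      refine Ideal.map_le_iff_le_comap.2 fun r hr ↦ ?_
      rw [Ideal.mem_comap, Module.mem_annihilator]
      intro t
      induction t with
      | zero => simp
      | add x y hx hy => rw [smul_add, hx, hy, add_zero]
      | tmul a x =>
        rw [algebraMap_smul, ← tmul_smul, Module.mem_annihilator.1 hr x, tmul_zero]
    exact Module.annihilator_eq_top_iff.1 (top_le_iff.1 (htop.ge.trans hle))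

theorem isTorsion_iff_annihilator_ne_bot [IsDomain R] [Module.Finite R M] :
    Module.IsTorsion R M ↔ Module.annihilator R M ≠ ⊥ := by
  refine ⟨fun htors ↦ ?_, fun hne x ↦ ?_⟩
  · obtain ⟨r, hr, hr0⟩ := Submodule.annihilator_top_inter_nonZeroDivisors htors
    rw [Submodule.annihilator_top] at hr
    exact (Submodule.ne_bot_iff _).2 ⟨r, hr, nonZeroDivisors.ne_zero hr0⟩
  · obtain ⟨r, hr, hr0⟩ := (Submodule.ne_bot_iff _).1 hne
    exact ⟨⟨r, mem_nonZeroDivisors_of_ne_zero hr0⟩, Module.mem_annihilator.1 hr x⟩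

theorem exists_ne_zero_smul_eq_zero_of_annihilator_le_span [IsDomain R] [IsPrincipalIdealRing R]
    (htors : Module.annihilator R M ≠ ⊥) {p : R} (hp : Prime p)
    (hle : Module.annihilator R M ≤ Ideal.span {p}) : ∃ x : M, x ≠ 0 ∧ p • x = 0 := by
  obtain ⟨a, ha⟩ := IsPrincipalIdealRing.principal (Module.annihilator R M)
  obtain ⟨b, rfl⟩ : p ∣ a := by
    rw [← Ideal.mem_span_singleton]
    exact hle (ha ▸ Submodule.mem_span_singleton_self a)
  have hb : b ∉ Module.annihilator R M := by
    rw [ha, Ideal.submodule_span_eq, Ideal.mem_span_singleton]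
    rintro ⟨c, hc⟩
    have hb0 : b ≠ 0 := by rintro rfl; simp [ha] at htors
    exact hp.not_isUnit (.of_mul_eq_one c (mul_left_cancel₀ hb0 (by linear_combination -hc)))
  obtain ⟨x, hx⟩ := not_forall.1 (mt Module.mem_annihilator.2 hb)
  have hpb : p * b ∈ Module.annihilator R M := ha ▸ Submodule.mem_span_singleton_self _
  exact ⟨b • x, hx, by rw [smul_smul, Module.mem_annihilator.1 hpb]⟩

theorem isUnit_algebraMap_of_map_annihilator_eq_top [IsDomain R] [IsPrincipalIdealRing R]
    (htop : (Module.annihilator R M).map (algebraMap R A) = ⊤) {p : R} (hp : Prime p) {x : M}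
    (hx : x ≠ 0) (hpx : p • x = 0) : IsUnit (algebraMap R A p) := by
  have hle : Module.annihilator R M ≤ Ideal.span {p} := fun r hr ↦ by
    rw [Ideal.mem_span_singleton]
    by_contra hpr
    obtain ⟨u, v, huv⟩ := (hp.irreducible.coprime_iff_not_dvd).2 hpr
    apply hx
    rw [← one_smul R x, ← huv, add_smul, mul_smul, mul_smul, hpx, Module.mem_annihilator.1 hr x,
      smul_zero, smul_zero, add_zero]
  rw [← Ideal.span_singleton_eq_top, ← Set.image_singleton, ← Ideal.map_span]
  exact top_le_iff.1 (htop.ge.trans (Ideal.map_mono hle))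

theorem subsingleton_tensorProduct_iff_isTorsion_and_isUnit [IsDomain R]
    [IsPrincipalIdealRing R] [Module.Finite R M] [Nontrivial A] :
    Subsingleton (A ⊗[R] M) ↔ Module.IsTorsion R M ∧
      ∀ p : R, Prime p → (∃ x : M, x ≠ 0 ∧ p • x = 0) → IsUnit (algebraMap R A p) := by
  rw [subsingleton_tensorProduct_iff_map_annihilator_eq_top, isTorsion_iff_annihilator_ne_bot]
  refine ⟨fun htop ↦ ⟨fun hbot ↦ ?_, ?_⟩, ?_⟩
  · rw [hbot, Ideal.map_bot] at htop
    exact bot_ne_top htop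
  · rintro p hp ⟨x, hx, hpx⟩
    exact isUnit_algebraMap_of_map_annihilator_eq_top A htop hp hx hpx
  · rintro ⟨hne, hunit⟩
    by_contra htop
    obtain ⟨Q, hQ, hle⟩ := Ideal.exists_le_maximal _ htop
    have hle' := Ideal.map_le_iff_le_comap.1 hle
    let P := Q.comap (algebraMap R A)
    have hP := Submodule.IsPrincipal.prime_generator_of_isPrime P (ne_bot_of_le_ne_bot hne hle')
    have htorsion := exists_ne_zero_smul_eq_zero_of_annihilator_le_span hne hP
      (by rwa [Ideal.span_singleton_generator])
    exact hQ.ne_top (Ideal.eq_top_of_isUnit_mem _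
      (Submodule.IsPrincipal.generator_mem P) (hunit _ hP htorsion))

theorem ker_baseChange_of_surjective {N : Type*} [AddCommGroup N] [Module R N] {f : M →ₗ[R] N}
    (hf : Function.Surjective f) :
    LinearMap.ker (f.baseChange A) = (LinearMap.ker f).baseChange A :=
  SetLike.ext (lTensor_exact A (LinearMap.exact_subtype_ker_map f) hf)

theorem span_one_tmul_eq_top_iff (s : Set M) :
    Submodule.span A (TensorProduct.mk R A M 1 '' s) = ⊤ ↔
      Subsingleton (A ⊗[R] (M ⧸ Submodule.span R s)) := by
  have hmkQ := (Submodule.span R s).mkQ_surjective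
  have hq := LinearMap.baseChange_surjective A hmkQ
  have hker := ker_baseChange_of_surjective A hmkQ
  rw [Submodule.ker_mkQ] at hker
  rw [← Submodule.baseChange_span, ← hker, LinearMap.ker_eq_top]
  refine ⟨fun h0 ↦ ⟨fun x y ↦ ?_⟩, fun _ ↦ Subsingleton.elim _ _⟩
  obtain ⟨x, rfl⟩ := hq x
  obtain ⟨y, rfl⟩ := hq y
  simp [h0]

end BaseChangeVanishing

section SmithNormalForm

variable {R : Type*} [CommRing R]

theorem exists_prime_dvd_not_isSMulRegular [IsDomain R] [IsPrincipalIdealRing R] {A : Type*}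
    [AddCommGroup A] [Module R A] {a : R} (ha : a ≠ 0) (h : ¬ IsSMulRegular A a) :
    ∃ p, Prime p ∧ p ∣ a ∧ ¬ IsSMulRegular A p := by
  have nonreg := biUnion_associatedPrimes_eq_compl_regular R A
  obtain ⟨P, hP, haP⟩ := Set.mem_iUnion₂.1 (nonreg.ge h)
  have hP0 : P ≠ ⊥ := fun h0 ↦ ha (by simpa [h0] using haP)
  have := hP.isPrime
  exact ⟨_, Submodule.IsPrincipal.prime_generator_of_isPrime P hP0,
    (Submodule.IsPrincipal.mem_iff_generator_dvd P).1 haP,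
    nonreg.le (Set.mem_biUnion hP (Submodule.IsPrincipal.generator_mem P))⟩

variable {M : Type*} [AddCommGroup M] [Module R M] {N : Submodule R M} {ι : Type*} {n : ℕ}

theorem lTensor_subtype_injective_iff_of_smithNormalForm (A : Type*) [AddCommGroup A] [Module R A]
    (s : Module.Basis.SmithNormalForm N ι n) :
    Function.Injective (N.subtype.lTensor A) ↔ ∀ i, IsSMulRegular A (s.a i) := by
  classical
  let eN := TensorProduct.equivFinsuppOfBasisRight (M := A) s.bN
  let eM := TensorProduct.equivFinsuppOfBasisRight (M := A) s.bM
  have diag (t : A ⊗[R] N) (i : Fin n) : eM (N.subtype.lTensor A t) (s.f i) = s.a i • eN t i := by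
    induction t with
    | zero => simp
    | add x y hx hy => simp [hx, hy]
    | tmul a x => simp [eM, eN, mul_smul]
  simp only [injective_iff_map_eq_zero, isSMulRegular_iff_right_eq_zero_of_smul]
  refine ⟨fun h i a hai ↦ ?_, fun h t ht ↦ ?_⟩
  · have ht : a ⊗ₜ[R] s.bN i = 0 := h _ (by
      rw [LinearMap.lTensor_tmul, Submodule.subtype_apply, s.snf, ← smul_tmul, hai, zero_tmul])
    simpa [eN] using DFunLike.congr_fun (congrArg eN ht) i
  · refine eN.injective (Finsupp.ext fun i ↦ ?_)
    simpa using h i _ (by rw [← diag, ht]; simp)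

theorem smithNormalForm_coeff_ne_zero [Nontrivial R] (s : Module.Basis.SmithNormalForm N ι n)
    (i : Fin n) : s.a i ≠ 0 :=
  fun h0 ↦ s.bN.ne_zero i (Subtype.ext (by rw [s.snf, h0, zero_smul, Submodule.coe_zero]))

theorem isSMulRegular_quotient_iff_of_smithNormalForm [IsDomain R]
    (s : Module.Basis.SmithNormalForm N ι n) {p : R} (hp : Prime p) :
    IsSMulRegular (M ⧸ N) p ↔ ∀ i, ¬ p ∣ s.a i := by
  rw [isSMulRegular_quotient_iff_mem_of_smul_mem]
  refine ⟨?_, fun h x hx ↦ ?_⟩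
  · rintro h i ⟨c, hc⟩
    have hmem : c • s.bM (s.f i) ∈ N := h _ (by rw [smul_smul, ← hc, ← s.snf]; exact (s.bN i).2)
    have hcoord := s.repr_apply_embedding_eq_repr_smul ⟨_, hmem⟩ (i := i)
    rw [map_smul, map_smul, Finsupp.smul_apply, Finsupp.smul_apply, Module.Basis.repr_self,
      Finsupp.single_eq_same, smul_eq_mul, smul_eq_mul, mul_one, hc, mul_right_comm] at hcoord
    have hc0 : c ≠ 0 := right_ne_zero_of_mul (hc ▸ smithNormalForm_coeff_ne_zero s i)
    exact hp.not_isUnit (.of_mul_eq_one _ (mul_right_cancel₀ hc0 (hcoord.symm.trans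
      (one_mul c).symm)))
  · have hdvd (i : Fin n) : p ∣ s.bN.repr ⟨p • x, hx⟩ i := by
      refine (hp.dvd_or_dvd ⟨s.bM.repr x (s.f i), ?_⟩).resolve_left (h i)
      have hcoord := s.repr_apply_embedding_eq_repr_smul ⟨p • x, hx⟩ (i := i)
      rw [map_smul, map_smul, Finsupp.smul_apply, Finsupp.smul_apply] at hcoord
      exact hcoord.symm
    choose z hz using hdvd
    let w : N := s.bN.equivFun.symm z
    have hw : (⟨p • x, hx⟩ : N) = p • w := s.bN.ext_elem fun i ↦ by
      rw [hz, map_smul, Finsupp.smul_apply, ← s.bN.equivFun_apply,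
        LinearEquiv.apply_symm_apply, smul_eq_mul]
    have := Module.Free.of_basis s.bM
    have hxw : x = w := smul_right_injective M hp.ne_zero (congrArg Subtype.val hw)
    exact hxw ▸ w.2

theorem lTensor_subtype_injective_iff [IsDomain R] [IsPrincipalIdealRing R] [Module.Finite R M]
    [Module.Free R M] (A : Type*) [AddCommGroup A] [Module R A] (N : Submodule R M) :
    Function.Injective (N.subtype.lTensor A) ↔
      ∀ p : R, Prime p → IsSMulRegular A p ∨ IsSMulRegular (M ⧸ N) p := by
  obtain ⟨n, s⟩ := N.smithNormalForm (Module.Free.chooseBasis R M)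
  rw [lTensor_subtype_injective_iff_of_smithNormalForm A s]
  refine ⟨fun h p hp ↦ or_iff_not_imp_right.2 fun hpN ↦ ?_, fun h i ↦ ?_⟩
  · rw [isSMulRegular_quotient_iff_of_smithNormalForm s hp] at hpN
    push Not at hpN
    obtain ⟨i, c, hc⟩ := hpN
    have := h i
    rw [hc, mul_comm] at this
    exact this.of_mul
  · by_contra hi
    obtain ⟨p, hp, hdvd, hpA⟩ :=
      exists_prime_dvd_not_isSMulRegular (smithNormalForm_coeff_ne_zero s i) hi
    exact (isSMulRegular_quotient_iff_of_smithNormalForm s hp).1 ((h p hp).resolve_left hpA) i hdvd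

end SmithNormalForm

section IntegerCoefficients

theorem isTorsion_int_iff_finite {M : Type*} [AddCommGroup M] [Module ℤ M]
    [Module.Finite ℤ M] : Module.IsTorsion ℤ M ↔ Finite M := by
  refine ⟨Module.finite_of_fg_torsion M, fun _ x ↦ ?_⟩
  exact ⟨⟨Nat.card M, mem_nonZeroDivisors_of_ne_zero (Nat.cast_ne_zero.2 Nat.card_pos.ne')⟩, by
    simp [Submonoid.smul_def, Nat.cast_smul_eq_nsmul]⟩

theorem forall_prime_int_iff {P : ℤ → Prop} (hneg : ∀ p, P (-p) ↔ P p) :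
    (∀ p, Prime p → P p) ↔ ∀ p : ℕ, p.Prime → P p := by
  refine ⟨fun h p hp ↦ h p (Nat.prime_iff_prime_int.1 hp), fun h p hp ↦ ?_⟩
  rcases p.natAbs_eq with hp' | hp' <;> rw [hp']
  · exact h _ (Int.prime_iff_natAbs_prime.1 hp)
  · exact (hneg _).2 (h _ (Int.prime_iff_natAbs_prime.1 hp))

theorem isSMulRegular_primeCast_iff {k : Type*} [CommRing k] [IsDomain k] {p : ℕ} (hp : p.Prime) :
    IsSMulRegular k (p : ℤ) ↔ ringChar k ≠ p := by
  have cast_eq_zero : (p : k) = 0 ↔ ringChar k = p :=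
    ⟨CharP.ringChar_of_prime_eq_zero hp, fun h ↦ h ▸ CharP.cast_eq_zero k (ringChar k)⟩
  rw [isSMulRegular_iff_right_eq_zero_of_smul, ne_eq, ← cast_eq_zero]
  refine ⟨fun h h0 ↦ one_ne_zero (h (1 : k) (by simp [h0])), fun h x hx ↦ ?_⟩
  simpa [h] using hx

theorem forall_prime_int_isUnit_iff (k M : Type*) [CommRing k] [AddCommGroup M] :
    (∀ p : ℤ, Prime p → (∃ x : M, x ≠ 0 ∧ p • x = 0) → IsUnit (algebraMap ℤ k p)) ↔
      ∀ p : ℕ, p.Prime → (∃ x : M, x ≠ 0 ∧ (p : ℤ) • x = 0) → IsUnit (p : k) := by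
  rw [forall_prime_int_iff (by simp)]
  simp only [map_natCast]

theorem forall_prime_int_isSMulRegular_iff (k M : Type*) [CommRing k] [IsDomain k]
    [AddCommGroup M] :
    (∀ p : ℤ, Prime p → (∃ x : M, x ≠ 0 ∧ p • x = 0) → IsSMulRegular k p) ↔
      ∀ p : ℕ, p.Prime → (∃ x : M, x ≠ 0 ∧ (p : ℤ) • x = 0) → ringChar k ≠ p := by
  rw [forall_prime_int_iff (by simp [isSMulRegular_iff_right_eq_zero_of_smul])]
  exact forall₂_congr fun p hp ↦ by rw [isSMulRegular_primeCast_iff hp]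

end IntegerCoefficients

section CoefficientExtension

variable {R : Type*} [CommRing R] (A : Type*) [CommRing A] [Algebra R A]
  {ι : Type*} [Fintype ι] [DecidableEq ι]

/-- Extension of coefficients on a submodule `N` of `ι → R`: the `A`-linear map
`A ⊗[R] N → (ι → A)` sending `a ⊗ x` to `a • x`, with `x` read in `A` coordinatewise. -/
noncomputable def extendCoeff (N : Submodule R (ι → R)) : A ⊗[R] N →ₗ[A] ι → A :=
  (piScalarRight R A A ι).toLinearMap ∘ₗ N.subtype.baseChange A

variable {A} in
@[simp]
theorem extendCoeff_tmul {N : Submodule R (ι → R)} (a : A) (x : N) :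
    extendCoeff A N (a ⊗ₜ x) = a • fun i ↦ algebraMap R A (x.1 i) := by
  ext i
  simp [extendCoeff, Algebra.smul_def, mul_comm]

variable {A} in
theorem extendCoeff_baseChange_inclusion {N N' : Submodule R (ι → R)} (h : N ≤ N')
    (t : A ⊗[R] N) :
    extendCoeff A N' ((Submodule.inclusion h).baseChange A t) = extendCoeff A N t := by
  induction t with
  | zero => simp
  | add x y hx hy => simp only [map_add, hx, hy]
  | tmul a x => simp

theorem range_extendCoeff_span (s : Set (ι → R)) :
    LinearMap.range (extendCoeff A (Submodule.span R s)) =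
      Submodule.span A ((fun x i ↦ algebraMap R A (x i)) '' s) := by
  rw [extendCoeff, LinearMap.range_comp, ← Submodule.baseChange, Submodule.baseChange_span,
    Submodule.map_span, Set.image_image]
  congr! with x
  simp [Algebra.algebraMap_eq_smul_one]

theorem extendCoeff_injective_iff [IsDomain R] [IsPrincipalIdealRing R] (N : Submodule R (ι → R)) :
    Function.Injective (extendCoeff A N) ↔
      ∀ p : R, Prime p → IsSMulRegular A p ∨ IsSMulRegular ((ι → R) ⧸ N) p := by
  rw [← lTensor_subtype_injective_iff]
  exact (piScalarRight R A A ι).injective.of_comp_iff _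

end CoefficientExtension

section ChainComplex

variable (R : Type*) [CommRing R] {m : ℕ}

theorem simplicialBoundary_single (J : Finset (Fin m)) :
    simplicialBoundary R m (Pi.single J 1) = missingFaceChain R J := by
  ext τ
  simp [simplicialBoundary, missingFaceChain]

theorem missingFaceChain_eq_sum_single (J : Finset (Fin m)) :
    missingFaceChain R J =
      ∑ j ∈ J, (-1 : R) ^ (J.filter (· < j)).card • Pi.single (J.erase j) (1 : R) := by
  ext τ
  simp only [missingFaceChain, Finset.sum_apply, Pi.smul_apply, Pi.single_apply, smul_eq_mul,
    mul_ite, mul_one, mul_zero, eq_comm]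

theorem erase_sign_cancel {J : Finset (Fin m)} {i j : Fin m} (hi : i ∈ J) (hij : i < j) :
    (-1 : R) ^ (J.filter (· < j)).card * (-1 : R) ^ ((J.erase j).filter (· < i)).card +
      (-1 : R) ^ (J.filter (· < i)).card * (-1 : R) ^ ((J.erase i).filter (· < j)).card = 0 := by
  have erase_above : (J.erase j).filter (· < i) = J.filter (· < i) := by grind
  have erase_below : (J.erase i).filter (· < j) = (J.filter (· < j)).erase i := by grind
  have card_erase : ((J.filter (· < j)).erase i).card + 1 = (J.filter (· < j)).card :=
    Finset.card_erase_add_one (by simp [hi, hij])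
  rw [erase_above, erase_below, ← card_erase]
  ring

theorem simplicialBoundary_missingFaceChain (J : Finset (Fin m)) :
    simplicialBoundary R m (missingFaceChain R J) = 0 := by
  rw [missingFaceChain_eq_sum_single, map_sum]
  simp only [map_smul, simplicialBoundary_single,
    missingFaceChain_eq_sum_single R (Finset.erase _ _), Finset.smul_sum, smul_smul]
  rw [Finset.sum_sigma']
  -- Deleting `j` then `i` cancels against deleting `i` then `j`.
  refine Finset.sum_involution (fun x _ ↦ ⟨x.2, x.1⟩) ?_ ?_ ?_ ?_
  · rintro ⟨j, i⟩ h
    obtain ⟨hj, hij, hi⟩ : j ∈ J ∧ i ≠ j ∧ i ∈ J := by simpa using h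
    dsimp only
    rw [Finset.erase_right_comm, ← add_smul]
    rcases lt_or_gt_of_ne hij with hlt | hgt
    · rw [erase_sign_cancel R hi hlt, zero_smul]
    · rw [add_comm, erase_sign_cancel R hj hgt, zero_smul]
  · grind
  · grind
  · intros; rfl

variable {R} {K : Finset (Finset (Fin m))}

theorem mem_chainsOn {x : Finset (Fin m) → R} : x ∈ chainsOn R K ↔ ∀ σ ∉ K, x σ = 0 := by
  simp only [chainsOn, Submodule.mem_pi, Set.mem_univ, true_imp_iff]
  refine forall_congr' fun σ ↦ ?_
  by_cases h : σ ∈ K <;> simp [h]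

theorem mem_cyclesOn {x : Finset (Fin m) → R} :
    x ∈ cyclesOn R K ↔ x ∈ chainsOn R K ∧ simplicialBoundary R m x = 0 :=
  Iff.rfl

variable (R K) in
theorem cyclesOn_le_chainsOn : cyclesOn R K ≤ chainsOn R K :=
  inf_le_left

variable (R K) in
theorem exact_cyclesOn_inclusion_submoduleMap :
    Function.Exact (Submodule.inclusion (cyclesOn_le_chainsOn R K))
      ((simplicialBoundary R m).submoduleMap (chainsOn R K)) := fun x ↦ by
  rw [Subtype.ext_iff, LinearMap.submoduleMap_coe_apply]
  exact ⟨fun hdx ↦ ⟨⟨x, x.2, hdx⟩, rfl⟩, fun ⟨z, hz⟩ ↦ hz ▸ z.2.2⟩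

variable (R K) in
theorem chainsOn_eq_span : chainsOn R K = Submodule.span R ((Pi.single · 1) '' (K : Set _)) := by
  refine le_antisymm (fun x hx ↦ ?_) (Submodule.span_le.2 ?_)
  · rw [← Finset.univ_sum_single x]
    refine Submodule.sum_mem _ fun J _ ↦ ?_
    by_cases hJ : J ∈ K
    · rw [← mul_one (x J), ← smul_eq_mul, Pi.single_smul]
      exact Submodule.smul_mem _ _ (Submodule.subset_span ⟨J, hJ, rfl⟩)
    · simp [mem_chainsOn.1 hx J hJ]
  · rintro _ ⟨J, hJ, rfl⟩
    refine mem_chainsOn.2 fun σ hσ ↦ Pi.single_eq_of_ne ?_ _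
    rintro rfl
    exact hσ hJ

variable (R K) in
theorem boundariesOn_eq_span :
    boundariesOn R K = Submodule.span R (missingFaceChain R '' (K : Set _)) := by
  rw [boundariesOn, chainsOn_eq_span, Submodule.map_span, Set.image_image]
  simp only [simplicialBoundary_single]

theorem missingFaceChain_mem_cyclesOn {J : Finset (Fin m)} (h : ∀ I ⊂ J, I ∈ K) :
    missingFaceChain R J ∈ cyclesOn R K := by
  refine ⟨?_, simplicialBoundary_missingFaceChain R J⟩
  rw [missingFaceChain_eq_sum_single, chainsOn_eq_span]
  exact Submodule.sum_mem _ fun j hj ↦ Submodule.smul_mem _ _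
    (Submodule.subset_span ⟨_, h _ (Finset.erase_ssubset hj), rfl⟩)

variable (R) in
theorem boundariesOn_le_cyclesOn (hdown : ∀ σ ∈ K, ∀ τ ⊆ σ, τ ∈ K) :
    boundariesOn R K ≤ cyclesOn R K := by
  rw [boundariesOn_eq_span, Submodule.span_le]
  rintro _ ⟨J, hJ, rfl⟩
  exact missingFaceChain_mem_cyclesOn fun I hI ↦ hdown J hJ I hI.subset

end ChainComplex

section Cycles

variable {R : Type*} [CommRing R] (A : Type*) [CommRing A] [Algebra R A] {m : ℕ}
  {K : Finset (Finset (Fin m))}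

theorem algebraMap_missingFaceChain (J : Finset (Fin m)) :
    (fun σ ↦ algebraMap R A (missingFaceChain R J σ)) = missingFaceChain A J := by
  ext σ
  simp [missingFaceChain, apply_ite (algebraMap R A)]

theorem simplicialBoundary_algebraMap (x : Finset (Fin m) → R) :
    simplicialBoundary A m (fun σ ↦ algebraMap R A (x σ)) =
      fun σ ↦ algebraMap R A (simplicialBoundary R m x σ) := by
  ext τ
  simp [simplicialBoundary, Matrix.mulVec, dotProduct, apply_ite (algebraMap R A)]

variable (R K)

theorem range_extendCoeff_chainsOn :
    LinearMap.range (extendCoeff A (chainsOn R K)) = chainsOn A K := by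
  have single (J : Finset (Fin m)) : (fun σ ↦ algebraMap R A (Pi.single (M := fun _ ↦ R) J 1 σ)) =
      Pi.single J 1 := by
    ext σ; simp [Pi.single_apply, apply_ite (algebraMap R A)]
  rw [chainsOn_eq_span, range_extendCoeff_span, chainsOn_eq_span, Set.image_image]
  simp only [single]

theorem range_extendCoeff_boundariesOn :
    LinearMap.range (extendCoeff A (boundariesOn R K)) = boundariesOn A K := by
  rw [boundariesOn_eq_span, range_extendCoeff_span, boundariesOn_eq_span, Set.image_image]
  simp only [algebraMap_missingFaceChain]

variable {R K}

theorem simplicialBoundary_extendCoeff (N : Submodule R (Finset (Fin m) → R)) (t : A ⊗[R] N) :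
    simplicialBoundary A m (extendCoeff A N t) = extendCoeff A (N.map (simplicialBoundary R m))
      (((simplicialBoundary R m).submoduleMap N).baseChange A t) := by
  induction t with
  | zero => simp
  | add x y hx hy => simp [hx, hy]
  | tmul a x => simp [simplicialBoundary_algebraMap]

theorem extendCoeff_mem_cyclesOn (t : A ⊗[R] cyclesOn R K) :
    extendCoeff A (cyclesOn R K) t ∈ cyclesOn A K := by
  induction t with
  | zero => simp
  | add x y hx hy => rw [map_add]; exact add_mem hx hy
  | tmul a z =>
    obtain ⟨hz, hdz⟩ := mem_cyclesOn.1 z.2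
    rw [extendCoeff_tmul]
    refine Submodule.smul_mem _ a (mem_cyclesOn.2 ⟨?_, ?_⟩)
    · exact mem_chainsOn.2 fun σ hσ ↦ by rw [mem_chainsOn.1 hz σ hσ, map_zero]
    · simp [simplicialBoundary_algebraMap, hdz, Pi.zero_def]

variable (R K) in
/-- The comparison map `A ⊗[R] Z_*(K; R) → Z_*(K; A)` on cycles. -/
noncomputable def cyclesComparison : A ⊗[R] cyclesOn R K →ₗ[A] cyclesOn A K :=
  (extendCoeff A (cyclesOn R K)).codRestrict _ (extendCoeff_mem_cyclesOn A)

theorem isSMulRegular_quotient_chainsOn [IsDomain R] {p : R} (hp : p ≠ 0) :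
    IsSMulRegular ((Finset (Fin m) → R) ⧸ chainsOn R K) p := by
  rw [isSMulRegular_quotient_iff_mem_of_smul_mem]
  simp only [mem_chainsOn, Pi.smul_apply, smul_eq_mul, mul_eq_zero, hp, false_or, imp_self,
    implies_true]

theorem isSMulRegular_quotient_cyclesOn [IsDomain R] {p : R} (hp : p ≠ 0) :
    IsSMulRegular ((Finset (Fin m) → R) ⧸ cyclesOn R K) p := by
  have hchains := (isSMulRegular_quotient_iff_mem_of_smul_mem _ _).1
    (isSMulRegular_quotient_chainsOn (K := K) hp)
  rw [isSMulRegular_quotient_iff_mem_of_smul_mem]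
  intro x hpx
  obtain ⟨hx, hdx⟩ := mem_cyclesOn.1 hpx
  rw [map_smul] at hdx
  refine mem_cyclesOn.2 ⟨hchains x hx, ?_⟩
  exact (smul_eq_zero.1 hdx).resolve_left hp

variable [IsDomain R] [IsPrincipalIdealRing R]

theorem extendCoeff_chainsOn_injective : Function.Injective (extendCoeff A (chainsOn R K)) :=
  (extendCoeff_injective_iff A _).2 fun _ hp ↦ .inr (isSMulRegular_quotient_chainsOn hp.ne_zero)

theorem extendCoeff_cyclesOn_injective : Function.Injective (extendCoeff A (cyclesOn R K)) :=
  (extendCoeff_injective_iff A _).2 fun _ hp ↦ .inr (isSMulRegular_quotient_cyclesOn hp.ne_zero)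

theorem cyclesComparison_surjective_iff :
    Function.Surjective (cyclesComparison R A K) ↔
      Function.Injective (extendCoeff A (boundariesOn R K)) := by
  let incl := (Submodule.inclusion (cyclesOn_le_chainsOn R K)).baseChange A
  let bdry := ((simplicialBoundary R m).submoduleMap (chainsOn R K)).baseChange A
  have bdry_surj : Function.Surjective bdry :=
    LinearMap.baseChange_surjective A (LinearMap.submoduleMap_surjective _ _)
  have exact_incl_bdry : Function.Exact incl bdry :=
    lTensor_exact A (exact_cyclesOn_inclusion_submoduleMap R K)
      (LinearMap.submoduleMap_surjective _ _)
  have extend_incl (u) : extendCoeff A (chainsOn R K) (incl u) = cyclesComparison R A K u :=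
    extendCoeff_baseChange_inclusion _ u
  have extend_bdry (t) : simplicialBoundary A m (extendCoeff A (chainsOn R K) t) =
      extendCoeff A (boundariesOn R K) (bdry t) := simplicialBoundary_extendCoeff A _ t
  rw [injective_iff_map_eq_zero]
  refine ⟨fun hsurj b hb ↦ ?_, fun hinj z ↦ ?_⟩
  · obtain ⟨t, rfl⟩ := bdry_surj b
    have ht : extendCoeff A (chainsOn R K) t ∈ cyclesOn A K :=
      ⟨(range_extendCoeff_chainsOn R A K).le ⟨t, rfl⟩, (extend_bdry t).trans hb⟩
    obtain ⟨u, hu⟩ := hsurj ⟨_, ht⟩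
    refine (exact_incl_bdry t).2 ⟨u, extendCoeff_chainsOn_injective A ?_⟩
    rw [extend_incl, hu]
  · obtain ⟨t, ht⟩ := (range_extendCoeff_chainsOn R A K).ge z.2.1
    obtain ⟨u, rfl⟩ := (exact_incl_bdry t).1 (hinj _ (by rw [← extend_bdry, ht]; exact z.2.2))
    exact ⟨u, Subtype.ext ((extend_incl u).symm.trans ht)⟩

end Cycles

section ReducedHomology

variable {R : Type*} [CommRing R] (A : Type*) [CommRing A] [Algebra R A] {m : ℕ}
  {K : Finset (Finset (Fin m))}

variable (R K) in
/-- The class map from cycles to reduced homology. -/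
noncomputable def redHomology.mk : cyclesOn R K →ₗ[R] redHomology R K :=
  Submodule.mkQ ((boundariesOn R K).comap (cyclesOn R K).subtype)

namespace redHomology

theorem mk_surjective : Function.Surjective (mk R K) :=
  Submodule.mkQ_surjective _

instance [IsNoetherianRing R] : Module.Finite R (redHomology R K) :=
  .of_surjective _ mk_surjective

theorem mk_eq_zero_iff {z : cyclesOn R K} : mk R K z = 0 ↔ z.1 ∈ boundariesOn R K :=
  Submodule.Quotient.mk_eq_zero _

theorem mfClass_eq_mk {I : Finset (Fin m)} (h : missingFaceChain R I ∈ cyclesOn R K) :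
    mfClass R K I = mk R K ⟨_, h⟩ :=
  dif_pos h

theorem isSMulRegular_iff [IsDomain R] (hdown : ∀ σ ∈ K, ∀ τ ⊆ σ, τ ∈ K) {p : R} (hp : p ≠ 0) :
    IsSMulRegular (redHomology R K) p ↔
      IsSMulRegular ((Finset (Fin m) → R) ⧸ boundariesOn R K) p := by
  have hcycles := (isSMulRegular_quotient_iff_mem_of_smul_mem _ _).1
    (isSMulRegular_quotient_cyclesOn (K := K) hp)
  rw [isSMulRegular_iff_right_eq_zero_of_smul, isSMulRegular_quotient_iff_mem_of_smul_mem,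
    mk_surjective.forall]
  simp only [← map_smul, mk_eq_zero_iff, Subtype.forall]
  exact ⟨fun h x hx ↦ h x (hcycles x (boundariesOn_le_cyclesOn R hdown hx)) hx,
    fun h x _ hx ↦ h x hx⟩

theorem ker_mk_baseChange_le :
    LinearMap.ker ((mk R K).baseChange A) ≤ LinearMap.ker (mk A K ∘ₗ cyclesComparison R A K) := by
  rw [ker_baseChange_of_surjective A mk_surjective, Submodule.baseChange_eq_span, Submodule.span_le]
  rintro _ ⟨z, hz, rfl⟩
  rw [SetLike.mem_coe, LinearMap.mem_ker, mk_eq_zero_iff] at hz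
  rw [SetLike.mem_coe, LinearMap.mem_ker, LinearMap.comp_apply, mk_eq_zero_iff,
    ← range_extendCoeff_boundariesOn R A K]
  exact ⟨1 ⊗ₜ ⟨z, hz⟩, by simp [cyclesComparison]⟩

variable (R K) in
/-- The universal coefficient map `A ⊗[R] H̃_*(K; R) → H̃_*(K; A)`. -/
noncomputable def comparison : A ⊗[R] redHomology R K →ₗ[A] redHomology A K :=
  (LinearMap.ker ((mk R K).baseChange A)).liftQ (mk A K ∘ₗ cyclesComparison R A K)
      (ker_mk_baseChange_le A) ∘ₗ
    (((mk R K).baseChange A).quotKerEquivOfSurjective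
      (LinearMap.baseChange_surjective A mk_surjective)).symm

theorem comparison_mk_baseChange (u : A ⊗[R] cyclesOn R K) :
    comparison R A K ((mk R K).baseChange A u) = mk A K (cyclesComparison R A K u) := by
  simp [comparison]

theorem comparison_mfClass {I : Finset (Fin m)} (h : IsMissingFace K I) :
    comparison R A K (1 ⊗ₜ mfClass R K I) = mfClass A K I := by
  rw [mfClass_eq_mk (missingFaceChain_mem_cyclesOn h.2),
    mfClass_eq_mk (missingFaceChain_mem_cyclesOn h.2), ← LinearMap.baseChange_tmul,
    comparison_mk_baseChange]
  congr 1
  ext1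
  simp [cyclesComparison, algebraMap_missingFaceChain]

theorem image_mfClass_eq_image_comparison :
    (fun I ↦ mfClass A K I) '' {I | IsMissingFace K I} = comparison R A K ''
      (TensorProduct.mk R A _ 1 '' ((fun I ↦ mfClass R K I) '' {I | IsMissingFace K I})) := by
  rw [Set.image_image, Set.image_image]
  exact Set.image_congr fun I hI ↦ (comparison_mfClass A hI).symm

theorem comparison_surjective_iff_cyclesComparison_surjective (hdown : ∀ σ ∈ K, ∀ τ ⊆ σ, τ ∈ K) :
    Function.Surjective (comparison R A K) ↔ Function.Surjective (cyclesComparison R A K) := by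
  have mk_baseChange_surj := LinearMap.baseChange_surjective A (mk_surjective (R := R) (K := K))
  refine ⟨fun hsurj z ↦ ?_, fun hsurj ↦ mk_surjective.forall.2 fun z ↦ ?_⟩
  · obtain ⟨u, hu⟩ := (hsurj.comp mk_baseChange_surj) (mk A K z)
    rw [Function.comp_apply, comparison_mk_baseChange, eq_comm, ← sub_eq_zero, ← map_sub,
      mk_eq_zero_iff, ← range_extendCoeff_boundariesOn R A K] at hu
    obtain ⟨b, hb⟩ := hu
    have hle := boundariesOn_le_cyclesOn R hdown
    have hz : cyclesComparison R A K ((Submodule.inclusion hle).baseChange A b) =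
        z - cyclesComparison R A K u :=
      Subtype.ext ((extendCoeff_baseChange_inclusion hle b).trans hb)
    exact ⟨_, (map_add _ _ u).trans (by rw [hz, sub_add_cancel])⟩
  · obtain ⟨u, rfl⟩ := hsurj z
    exact ⟨_, comparison_mk_baseChange A u⟩

variable [IsDomain R] [IsPrincipalIdealRing R]

theorem comparison_injective (hdown : ∀ σ ∈ K, ∀ τ ⊆ σ, τ ∈ K) :
    Function.Injective (comparison R A K) := by
  refine (injective_iff_map_eq_zero _).2 fun t ht ↦ ?_
  obtain ⟨u, rfl⟩ := LinearMap.baseChange_surjective A mk_surjective t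
  rw [comparison_mk_baseChange, mk_eq_zero_iff, ← range_extendCoeff_boundariesOn R A K] at ht
  obtain ⟨b, hb⟩ := ht
  have hle := boundariesOn_le_cyclesOn R hdown
  obtain rfl : (Submodule.inclusion hle).baseChange A b = u :=
    extendCoeff_cyclesOn_injective A ((extendCoeff_baseChange_inclusion hle b).trans hb)
  have hcomp : mk R K ∘ₗ Submodule.inclusion hle = 0 :=
    LinearMap.ext fun x ↦ mk_eq_zero_iff.2 x.2
  rw [← LinearMap.comp_apply, ← LinearMap.baseChange_comp, hcomp, LinearMap.baseChange_zero,
    LinearMap.zero_apply]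

theorem comparison_surjective_iff (hdown : ∀ σ ∈ K, ∀ τ ⊆ σ, τ ∈ K) :
    Function.Surjective (comparison R A K) ↔
      ∀ p : R, Prime p → IsSMulRegular A p ∨ IsSMulRegular (redHomology R K) p := by
  rw [comparison_surjective_iff_cyclesComparison_surjective A hdown,
    cyclesComparison_surjective_iff, extendCoeff_injective_iff]
  refine forall₂_congr fun p hp ↦ ?_
  rw [isSMulRegular_iff hdown hp.ne_zero]

end redHomology

end ReducedHomology

theorem stmt7_general (R : Type*) [CommRing R] [IsDomain R] [IsPrincipalIdealRing R]
    (k : Type*) [CommRing k] [Nontrivial k] [Algebra R k]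
    {m : ℕ} (K : Finset (Finset (Fin m))) (hdown : ∀ σ ∈ K, ∀ τ ⊆ σ, τ ∈ K) :
    let C := redHomology R K ⧸
      Submodule.span R ((fun I => mfClass R K I) '' {I | IsMissingFace K I})
    ((Submodule.span k ((fun I => mfClass k K I) '' {I | IsMissingFace K I}) = ⊤) ↔
      (Module.IsTorsion R C ∧
       (∀ p : R, Prime p → (∃ x : C, x ≠ 0 ∧ p • x = 0) → IsUnit (algebraMap R k p)) ∧
       (∀ p : R, Prime p →
          (∃ x : redHomology R K, x ≠ 0 ∧ p • x = 0) → IsSMulRegular k p))) ∧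
    ((Submodule.span k ((fun I => mfClass k K I) '' {I | IsMissingFace K I}) = ⊤) →
      Nonempty ((TensorProduct R k (redHomology R K)) ≃ₗ[k] redHomology k K)) := by
  have hinj := redHomology.comparison_injective (R := R) k hdown
  have hspan := span_image_eq_top_iff_of_injective hinj
    (TensorProduct.mk R k _ 1 '' ((fun I ↦ mfClass R K I) '' {I | IsMissingFace K I}))
  rw [← redHomology.image_mfClass_eq_image_comparison] at hspan
  refine ⟨?_, fun h ↦ ⟨.ofBijective _ ⟨hinj, (hspan.1 h).1⟩⟩⟩
  rw [hspan, span_one_tmul_eq_top_iff, subsingleton_tensorProduct_iff_isTorsion_and_isUnit,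
    redHomology.comparison_surjective_iff k hdown, and_comm (b := _ ∧ _), and_assoc]
  simp only [isSMulRegular_or_iff_torsion_imp]

theorem stmt7 (k : Type*) [CommRing k] [IsDomain k] [IsPrincipalIdealRing k]
    {m : ℕ} (K : Finset (Finset (Fin m)))
    (hdown : ∀ σ ∈ K, ∀ τ ⊆ σ, τ ∈ K) (hempty : (∅ : Finset (Fin m)) ∈ K) :
    -- the cokernel of `⊕_{I∈MF(K)} ℤ·x_I → H̃_*(K; ℤ)`
    let C := redHomology ℤ K ⧸
      Submodule.span ℤ ((fun I => mfClass ℤ K I) '' {I | IsMissingFace K I})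
    -- `H̃_*(K; k)` generated by missing-face classes ...
    ((Submodule.span k ((fun I => mfClass k K I) '' {I | IsMissingFace K I}) = ⊤) ↔
      (Finite C ∧
       (∀ p : ℕ, p.Prime → (∃ x : C, x ≠ 0 ∧ (p : ℤ) • x = 0) → IsUnit ((p : ℕ) : k)) ∧
       (∀ p : ℕ, p.Prime →
          (∃ x : redHomology ℤ K, x ≠ 0 ∧ (p : ℤ) • x = 0) → ringChar k ≠ p))) ∧
    -- ... and in that case `H̃_*(K; k) ≅ H̃_*(K; ℤ) ⊗ k`
    ((Submodule.span k ((fun I => mfClass k K I) '' {I | IsMissingFace K I}) = ⊤) →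
      Nonempty ((TensorProduct ℤ k (redHomology ℤ K)) ≃ₗ[k] redHomology k K)) := by
  -- `Module ℤ (redHomology ℤ K)` unfolds to the canonical `ℤ`-action used in the statement.
  exact (stmt7_general ℤ k K hdown).imp_left fun h ↦ h.trans <|
    and_congr isTorsion_int_iff_finite <|
      and_congr (forall_prime_int_isUnit_iff k _) (forall_prime_int_isSMulRegular_iff k _)
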